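/- Rohlin's Lemma for isometries of the Urysohn space: for every infinite set S ⊆ ℕ, the set {g ∈ Iso(U) : ∃n ∈ S, g^n = 1} is dense in the isometry group Iso(U) of the Urysohn metric space (with the topology of pointwise convergence). -/

import Mathlib

/-- The one-point extension property characterising the Urysohn space: every finite subset
`F` together with an admissible assignment of (positive) prospective distances `r` is realised
by an actual point `z`. -/
def IsUrysohn (U : Type*) [MetricSpace U] : Prop :=
  ∀ (F : Finset U) (r : U → ℝ),
    (∀ x ∈ F, 0 < r x) →
    (∀ x ∈ F, ∀ y ∈ F, |r x - r y| ≤ dist x y ∧ dist x y ≤ r x + r y) →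
    ∃ z : U, ∀ x ∈ F, dist z x = r x

/-!
An isometric action of a finite group `G` on a finite subset `F` of `U` extends to an action on
all of `U`: given a further point `x`, the Kuratowski map `u ↦ (dist u v)_{v ∈ F}` embeds
`F ∪ {x}` isometrically into the `G`-space of functions on `F`, equivariantly on `F`. The
`G`-orbits of its image form a finite invariant set, which the extension property maps back into
`U`; this extends the action to a finite set containing `x`. Iterating along a dense sequence
and completing yields an action on `U`.

It therefore suffices to approximate an isometry `h` on a finite set `A` by the generator of an
action of `ZMod n` on a finite set. To this end `A ∪ h(A)` is embedded into a space of functions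
on `ZMod n` on which `h` becomes, up to `ε`, the cyclic shift: `u` is sent to the distances from
`h ^ (-k) u` to the points of `A ∪ h(A)`, damped so slowly in `k` that one step costs at most
`ε`, while `n` is so large that they have vanished where the cycle closes up.
-/

open Set Filter
open scoped Pointwise

section IsometryOn

variable {X Y : Type*}

/-- `f` preserves distances between points of `s`. Since `f` is defined everywhere, maps on
different subsets can be compared without coercions between subtypes. -/
def IsometryOn [PseudoMetricSpace X] [PseudoMetricSpace Y] (f : X → Y) (s : Set X) : Prop :=
  ∀ ⦃x⦄, x ∈ s → ∀ ⦃y⦄, y ∈ s → dist (f x) (f y) = dist x y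

namespace IsometryOn

section PseudoMetricSpace

variable [PseudoMetricSpace X] [PseudoMetricSpace Y] {f : X → Y} {s t : Set X}

lemma mono (hf : IsometryOn f s) (hts : t ⊆ s) : IsometryOn f t :=
  fun _ hx _ hy => hf (hts hx) (hts hy)

lemma isometry_domRestrict (hf : IsometryOn f s) : Isometry (s.domRestrict f) :=
  Isometry.of_dist_eq fun x y => hf x.2 y.2

lemma update_insert [DecidableEq X] (hf : IsometryOn f s) {x : X} (hx : x ∉ s) {y : Y}
    (hy : ∀ z ∈ s, dist y (f z) = dist x z) :
    IsometryOn (Function.update f x y) (insert x s) := by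
  have update_eq : ∀ z ∈ s, Function.update f x y z = f z := fun z hz =>
    Function.update_of_ne (ne_of_mem_of_not_mem hz hx) _ _
  rintro u (rfl | hu) v (rfl | hv)
  · simp only [dist_self]
  · rw [Function.update_self, update_eq v hv, hy v hv]
  · rw [Function.update_self, update_eq u hu, dist_comm, hy u hu, dist_comm]
  · rw [update_eq u hu, update_eq v hv, hf hu hv]

end PseudoMetricSpace

lemma injOn [MetricSpace X] [PseudoMetricSpace Y] {f : X → Y} {s : Set X}
    (hf : IsometryOn f s) : InjOn f s :=
  fun x hx y hy hxy => by rw [← dist_eq_zero, ← hf hx hy, hxy, dist_self]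

lemma exists_leftInvOn [MetricSpace X] [PseudoMetricSpace Y] [Nonempty X] {f : X → Y}
    {s : Set X} (hf : IsometryOn f s) : ∃ r : Y → X, IsometryOn r (f '' s) ∧ LeftInvOn r f s := by
  have hinv := hf.injOn.leftInvOn_invFunOn
  refine ⟨Function.invFunOn f s, ?_, hinv⟩
  rintro _ ⟨x, hx, rfl⟩ _ ⟨y, hy, rfl⟩
  rw [hinv hx, hinv hy, hf hx hy]

lemma exists_isometry_eqOn [PseudoMetricSpace X] [MetricSpace Y] [CompleteSpace Y] {f : X → Y}
    {s : Set X} (hf : IsometryOn f s) (hs : Dense s) :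
    ∃ F : X → Y, Isometry F ∧ EqOn F f s := by
  have hui : IsUniformInducing ((↑) : s → X) := isometry_subtype_coe.isUniformInducing
  have huc : UniformContinuous (s.domRestrict f) := hf.isometry_domRestrict.uniformContinuous
  let F : X → Y := (hui.isDenseInducing hs.denseRange_val).extend (s.domRestrict f)
  have hFc : Continuous F :=
    (uniformContinuous_uniformly_extend hui hs.denseRange_val huc).continuous
  have hFf : ∀ x : s, F x = f x := uniformly_extend_of_ind hui hs.denseRange_val huc
  refine ⟨F, Isometry.of_dist_eq fun x y => ?_, fun x hx => hFf ⟨x, hx⟩⟩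
  refine hs.denseRange_val.induction_on₂ (p := fun x y => dist (F x) (F y) = dist x y)
    (isClosed_eq (by fun_prop) (by fun_prop)) (fun x y => ?_) x y
  rw [hFf, hFf, hf x.2 y.2]

end IsometryOn

-- The Kuratowski embedding: the coordinate at one of the two points is an exact distance.
lemma isometryOn_dist_insert [PseudoMetricSpace X] (s : Set X) [Fintype s] (x : X) :
    IsometryOn (fun (u : X) (v : s) => dist u (v : X)) (insert x s) := by
  let K (u : X) (v : s) : ℝ := dist u v
  have dist_K : ∀ u, ∀ v ∈ s, dist (K u) (K v) = dist u v := by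
    intro u v hv
    refine le_antisymm ?_ ?_
    · exact (dist_pi_le_iff dist_nonneg).2 fun w => abs_dist_sub_le u v w
    · simpa [K, Real.dist_eq] using dist_le_pi_dist (K u) (K v) ⟨v, hv⟩
  rintro u hu v (rfl | hv)
  · rcases hu with rfl | hu
    · simp only [dist_self]
    · rw [dist_comm, dist_comm u]
      exact dist_K _ u hu
  · exact dist_K u v hv

end IsometryOn

/-- An isometric action of `G` on the subset `carrier` of `U`. The values of `act` outside
`carrier` are irrelevant; total functions make restriction and union of actions painless. -/
structure PartialIsometricAction (G U : Type*) [Monoid G] [PseudoMetricSpace U] where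
  carrier : Set U
  act : G → U → U
  act_mem : ∀ g ⦃x⦄, x ∈ carrier → act g x ∈ carrier
  one_act : ∀ ⦃x⦄, x ∈ carrier → act 1 x = x
  mul_act : ∀ g h ⦃x⦄, x ∈ carrier → act (g * h) x = act g (act h x)
  isometryOn_act : ∀ g, IsometryOn (act g) carrier

namespace PartialIsometricAction

section Order

variable {G U : Type*} [Monoid G] [PseudoMetricSpace U]

/-- `p ≤ q` means that `q` extends `p`. -/
instance : Preorder (PartialIsometricAction G U) where
  le p q := p.carrier ⊆ q.carrier ∧ ∀ g, EqOn (q.act g) (p.act g) p.carrier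
  le_refl _ := ⟨Subset.rfl, fun _ => eqOn_refl _ _⟩
  le_trans _ _ _ hpq hqr :=
    ⟨hpq.1.trans hqr.1, fun g => ((hqr.2 g).mono hpq.1).trans (hpq.2 g)⟩

lemma carrier_subset {p q : PartialIsometricAction G U} (h : p ≤ q) : p.carrier ⊆ q.carrier :=
  h.1

lemma act_eqOn {p q : PartialIsometricAction G U} (h : p ≤ q) (g : G) :
    EqOn (q.act g) (p.act g) p.carrier :=
  h.2 g

lemma bddAbove_range_of_monotone {p : ℕ → PartialIsometricAction G U} (hp : Monotone p) :
    BddAbove (range p) := by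
  -- A point is acted upon as at the first stage containing it.
  let act (g : G) (x : U) : U := (p (sInf {k | x ∈ (p k).carrier})).act g x
  have act_eq : ∀ {k x}, x ∈ (p k).carrier → ∀ g, act g x = (p k).act g x := by
    intro k x hx g
    have hfirst : sInf {k | x ∈ (p k).carrier} ∈ {k | x ∈ (p k).carrier} := Nat.sInf_mem ⟨k, hx⟩
    exact (act_eqOn (hp (Nat.sInf_le hx)) g hfirst).symm
  have carrier_mono : Monotone fun k => (p k).carrier := fun _ _ hkl => carrier_subset (hp hkl)
  refine ⟨⟨⋃ k, (p k).carrier, act, fun g x hx => ?_, fun x hx => ?_, fun g h x hx => ?_,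
    fun g x hx y hy => ?_⟩, forall_mem_range.2 fun k =>
      ⟨subset_iUnion (fun k => (p k).carrier) k, fun g x hx => act_eq hx g⟩⟩
  · obtain ⟨k, hk⟩ := mem_iUnion.1 hx
    exact mem_iUnion.2 ⟨k, act_eq hk g ▸ (p k).act_mem g hk⟩
  · obtain ⟨k, hk⟩ := mem_iUnion.1 hx
    rw [act_eq hk, (p k).one_act hk]
  · obtain ⟨k, hk⟩ := mem_iUnion.1 hx
    rw [act_eq hk, act_eq hk, act_eq ((p k).act_mem h hk), (p k).mul_act g h hk]
  · obtain ⟨k, hk⟩ := mem_iUnion.1 hx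
    obtain ⟨l, hl⟩ := mem_iUnion.1 hy
    have hxm := carrier_mono (le_max_left k l) hk
    have hym := carrier_mono (le_max_right k l) hl
    rw [act_eq hxm, act_eq hym, (p _).isometryOn_act g hxm hym]

end Order

section Group

variable {G U : Type*} [Group G]

/-- The action of `G` on the carrier, as a subtype. -/
abbrev mulAction [PseudoMetricSpace U] (p : PartialIsometricAction G U) :
    MulAction G p.carrier where
  smul g x := ⟨p.act g x, p.act_mem g x.2⟩
  one_smul x := Subtype.ext (p.one_act x.2)
  mul_smul g h x := Subtype.ext (p.mul_act g h x.2)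

lemma act_act_inv [PseudoMetricSpace U] (p : PartialIsometricAction G U) (g : G) {x : U}
    (hx : x ∈ p.carrier) : p.act g (p.act g⁻¹ x) = x := by
  rw [← p.mul_act g g⁻¹ hx, mul_inv_cancel, p.one_act hx]

lemma exists_monoidHom_of_dense [MetricSpace U] [CompleteSpace U]
    (p : PartialIsometricAction G U) (hp : Dense p.carrier) :
    ∃ ρ : G →* (U ≃ᵢ U), ∀ g, EqOn (ρ g) (p.act g) p.carrier := by
  choose T hT hTp using fun g => (p.isometryOn_act g).exists_isometry_eqOn hp
  have T_one : T 1 = id := (hT 1).continuous.ext_on hp continuous_id fun x hx => by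
    rw [hTp 1 hx, p.one_act hx, id]
  have T_mul : ∀ g h, T (g * h) = T g ∘ T h := fun g h =>
    (hT _).continuous.ext_on hp ((hT g).continuous.comp (hT h).continuous) fun x hx => by
      rw [hTp _ hx, p.mul_act g h hx, Function.comp_apply, hTp h hx, hTp g (p.act_mem h hx)]
  have T_inv : ∀ g x, T g (T g⁻¹ x) = x := fun g x => by
    rw [← Function.comp_apply (f := T g), ← T_mul, mul_inv_cancel, T_one, id]
  let ρ : G →* (U ≃ᵢ U) :=
    { toFun := fun g => IsometryEquiv.mk' (T g) (T g⁻¹) (T_inv g) (hT g)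
      map_one' := IsometryEquiv.ext fun x => congrFun T_one x
      map_mul' := fun g h => IsometryEquiv.ext fun x => congrFun (T_mul g h) x }
  exact ⟨ρ, hTp⟩

end Group

end PartialIsometricAction

lemma IsometryOn.exists_partialIsometricAction {G U Y : Type*} [Monoid G] [PseudoMetricSpace U]
    [MetricSpace Y] [Nonempty Y] [MulAction G Y] [IsIsometricSMul G Y] {f : Y → U} {t : Set Y}
    (hf : IsometryOn f t) (ht : ∀ g : G, ∀ y ∈ t, g • y ∈ t) :
    ∃ p : PartialIsometricAction G U, p.carrier = f '' t ∧
      ∀ g, ∀ y ∈ t, p.act g (f y) = f (g • y) := by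
  obtain ⟨r, -, hr⟩ := hf.exists_leftInvOn
  have act_eq : ∀ g : G, ∀ y ∈ t, f (g • r (f y)) = f (g • y) := fun g y hy => by rw [hr hy]
  refine ⟨⟨f '' t, fun g u => f (g • r u), ?_, ?_, ?_, ?_⟩, rfl, act_eq⟩
  · rintro g _ ⟨y, hy, rfl⟩
    rw [act_eq g y hy]
    exact mem_image_of_mem f (ht g y hy)
  · rintro _ ⟨y, hy, rfl⟩
    rw [act_eq 1 y hy, one_smul]
  · rintro g h _ ⟨y, hy, rfl⟩
    rw [act_eq _ y hy, act_eq h y hy, act_eq g _ (ht h y hy), mul_smul]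
  · rintro g _ ⟨y, hy, rfl⟩ _ ⟨z, hz, rfl⟩
    simp only [act_eq g y hy, act_eq g z hz]
    rw [hf (ht g y hy) (ht g z hz), dist_smul, hf hy hz]

section ArrowAction

attribute [local instance] arrowAction

lemma isIsometricSMul_arrowAction {G ι E : Type*} [Group G] [Fintype ι] [MulAction G ι]
    [PseudoMetricSpace E] : IsIsometricSMul G (ι → E) :=
  ⟨fun g => (IsometryEquiv.piCongrLeft' (Y := fun _ => E) (MulAction.toPerm g)).isometry⟩

end ArrowAction

namespace IsUrysohn

variable {G U Y : Type*} [MetricSpace U] [MetricSpace Y]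

lemma nonempty (hU : IsUrysohn U) : Nonempty U :=
  (hU ∅ 0 (by simp) (by simp)).nonempty

lemma exists_dist_eq (hU : IsUrysohn U) {F : Set U} (hF : F.Finite) {r : U → ℝ}
    (hr : ∀ x ∈ F, ∀ y ∈ F, |r x - r y| ≤ dist x y ∧ dist x y ≤ r x + r y) :
    ∃ p : U, ∀ x ∈ F, dist p x = r x := by
  have r_nonneg : ∀ x ∈ F, 0 ≤ r x := fun x hx => by
    have := (hr x hx x hx).2
    rw [dist_self] at this
    linarith
  by_cases h0 : ∃ x ∈ F, r x = 0
  · obtain ⟨x, hx, hrx⟩ := h0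
    refine ⟨x, fun y hy => ?_⟩
    obtain ⟨hlip, hsum⟩ := hr x hx y hy
    rw [hrx, zero_sub, abs_neg, abs_of_nonneg (r_nonneg y hy)] at hlip
    linarith
  · push Not at h0
    obtain ⟨p, hp⟩ := hU hF.toFinset r
      (fun x hx => (r_nonneg x (hF.mem_toFinset.1 hx)).lt_of_ne' (h0 x (hF.mem_toFinset.1 hx)))
      (fun x hx y hy => hr x (hF.mem_toFinset.1 hx) y (hF.mem_toFinset.1 hy))
    exact ⟨p, fun x hx => hp x (hF.mem_toFinset.2 hx)⟩

lemma exists_isometryOn_insert (hU : IsUrysohn U) {f : Y → U} {s : Set Y} (hs : s.Finite)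
    (hf : IsometryOn f s) (y : Y) :
    ∃ f' : Y → U, EqOn f' f s ∧ IsometryOn f' (insert y s) := by
  classical
  by_cases hy : y ∈ s
  · exact ⟨f, eqOn_refl f s, by rwa [insert_eq_of_mem hy]⟩
  have : Nonempty Y := ⟨y⟩
  obtain ⟨r, hri, hr⟩ := hf.exists_leftInvOn
  obtain ⟨p, hp⟩ := hU.exists_dist_eq (hs.image f) (r := fun u => dist y (r u)) fun u hu v hv => by
    rw [← hri hu hv, dist_comm y, dist_comm y]
    exact ⟨abs_dist_sub_le _ _ y, dist_triangle_right _ _ y⟩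
  refine ⟨Function.update f y p, fun z hz => ?_, hf.update_insert hy fun z hz => ?_⟩
  · exact Function.update_of_ne (ne_of_mem_of_not_mem hz hy) _ _
  · rw [hp _ (mem_image_of_mem f hz), hr hz]

lemma exists_isometryOn_union (hU : IsUrysohn U) {f : Y → U} {s t : Set Y} (hs : s.Finite)
    (ht : t.Finite) (hf : IsometryOn f s) :
    ∃ f' : Y → U, EqOn f' f s ∧ IsometryOn f' (s ∪ t) := by
  induction t, ht using Set.Finite.induction_on with
  | empty => exact ⟨f, eqOn_refl f s, by rwa [union_empty]⟩
  | @insert y t _ ht ih =>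
    obtain ⟨f₁, hf₁, hf₁i⟩ := ih
    obtain ⟨f₂, hf₂, hf₂i⟩ := hU.exists_isometryOn_insert (hs.union ht) hf₁i y
    exact ⟨f₂, (hf₂.mono subset_union_left).trans hf₁, by rwa [union_insert]⟩

lemma exists_partialIsometricAction (hU : IsUrysohn U) [Group G] [Finite G] [MulAction G Y]
    [IsIsometricSMul G Y] {s : Set U} (hs : s.Finite) {e : U → Y} (he : IsometryOn e s) :
    ∃ p : PartialIsometricAction G U, p.carrier.Finite ∧ s ⊆ p.carrier ∧
      ∀ g, ∀ x ∈ s, ∀ y ∈ s, dist (p.act g x) y = dist (g • e x) (e y) := by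
  have := hU.nonempty
  have : Nonempty Y := this.map e
  obtain ⟨r, hri, hr⟩ := he.exists_leftInvOn
  let t : Set Y := (univ : Set G) • (e '' s)
  have ht : t.Finite := finite_univ.smul (hs.image e)
  have smul_mem : ∀ g : G, ∀ y ∈ t, g • y ∈ t := by
    rintro g _ ⟨h, -, y, hy, rfl⟩
    exact ⟨g * h, mem_univ _, y, hy, mul_smul g h y⟩
  have mem_t : ∀ x ∈ s, e x ∈ t := fun x hx =>
    ⟨1, mem_univ _, e x, mem_image_of_mem e hx, one_smul G _⟩
  obtain ⟨f, hfr, hf⟩ := hU.exists_isometryOn_union (hs.image e) ht hri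
  have hft : IsometryOn f t := hf.mono subset_union_right
  have hfe : ∀ x ∈ s, f (e x) = x := fun x hx =>
    (hfr (mem_image_of_mem e hx)).trans (hr hx)
  obtain ⟨p, hpc, hp⟩ := hft.exists_partialIsometricAction smul_mem
  refine ⟨p, hpc ▸ ht.image f, fun x hx => hpc ▸ ⟨e x, mem_t x hx, hfe x hx⟩,
    fun g x hx y hy => ?_⟩
  calc dist (p.act g x) y = dist (p.act g (f (e x))) (f (e y)) := by rw [hfe x hx, hfe y hy]
    _ = dist (f (g • e x)) (f (e y)) := by rw [hp g _ (mem_t x hx)]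
    _ = dist (g • e x) (e y) := hft (smul_mem g _ (mem_t x hx)) (mem_t y hy)

section Extension

variable [Group G] [Finite G]

open PartialIsometricAction

attribute [local instance] arrowAction in
lemma exists_ge_mem_carrier (hU : IsUrysohn U) (p : PartialIsometricAction G U)
    (hp : p.carrier.Finite) (x : U) :
    ∃ q : PartialIsometricAction G U, q.carrier.Finite ∧ x ∈ q.carrier ∧ p ≤ q := by
  have := hp.fintype
  let : MulAction G p.carrier := p.mulAction
  have : IsIsometricSMul G (p.carrier → ℝ) := isIsometricSMul_arrowAction
  let K (u : U) (v : p.carrier) : ℝ := dist u v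
  have smul_K : ∀ g, ∀ u ∈ p.carrier, g • K u = K (p.act g u) := fun g u hu => by
    funext v
    calc dist u (p.act g⁻¹ v)
        = dist (p.act g u) (p.act g (p.act g⁻¹ v)) :=
          (p.isometryOn_act g hu (p.act_mem g⁻¹ v.2)).symm
      _ = dist (p.act g u) v := by rw [p.act_act_inv g v.2]
  obtain ⟨q, hq, hsub, hdist⟩ := hU.exists_partialIsometricAction (G := G) (hp.insert x)
    (isometryOn_dist_insert p.carrier x)
  refine ⟨q, hq, hsub (mem_insert _ _), (subset_insert _ _).trans hsub, fun g u hu => ?_⟩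
  rw [← dist_eq_zero, hdist g u (mem_insert_of_mem x hu) _ (mem_insert_of_mem x (p.act_mem g hu))]
  exact dist_eq_zero.2 (smul_K g u hu)

lemma exists_monoidHom_eqOn [CompleteSpace U] [TopologicalSpace.SeparableSpace U]
    (hU : IsUrysohn U) (p : PartialIsometricAction G U) (hp : p.carrier.Finite) :
    ∃ ρ : G →* (U ≃ᵢ U), ∀ g, EqOn (ρ g) (p.act g) p.carrier := by
  have := hU.nonempty
  let P := {q : PartialIsometricAction G U // q.carrier.Finite}
  let d : ℕ → U := TopologicalSpace.denseSeq U
  let D (i : ℕ) : Order.Cofinal P :=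
    { carrier := {q | d i ∈ q.1.carrier}
      isCofinal := fun q => by
        obtain ⟨q', hfin, hmem, hle⟩ := hU.exists_ge_mem_carrier q.1 q.2 (d i)
        exact ⟨⟨q', hfin⟩, hmem, hle⟩ }
  let c : ℕ → P := Order.sequenceOfCofinals ⟨p, hp⟩ D
  have hc : Monotone fun k => (c k).1 := (Subtype.mono_coe _).comp
    (Order.sequenceOfCofinals.monotone _ D)
  obtain ⟨q, hq⟩ := bddAbove_range_of_monotone hc
  have le_q : ∀ k, (c k).1 ≤ q := forall_mem_range.1 hq
  have q_dense : Dense q.carrier := by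
    refine (TopologicalSpace.denseRange_denseSeq U).mono ?_
    rintro _ ⟨i, rfl⟩
    exact carrier_subset (le_q _) (Order.sequenceOfCofinals.encode_mem (⟨p, hp⟩ : P) D i)
  obtain ⟨ρ, hρ⟩ := q.exists_monoidHom_of_dense q_dense
  exact ⟨ρ, fun g => ((hρ g).mono (carrier_subset (le_q 0))).trans (act_eqOn (le_q 0) g)⟩

end Extension

end IsUrysohn

section Tent

/-- The distance `d`, truncated at `C` and lowered by `ε` at each step away from time `0`. -/
def tent (C ε d : ℝ) (k : ℤ) : ℝ := max (min C d - ε * |(k : ℝ)|) 0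

variable {C ε : ℝ}

lemma tent_zero {d : ℝ} (hd : 0 ≤ d) (hdC : d ≤ C) : tent C ε d 0 = d := by
  simp [tent, hd, hdC]

lemma tent_eq_zero {k : ℤ} (hk : C ≤ ε * |(k : ℝ)|) (d : ℝ) : tent C ε d k = 0 :=
  max_eq_right (sub_nonpos.2 ((min_le_left C d).trans hk))

lemma abs_tent_sub_tent_le (C ε d d' : ℝ) (k : ℤ) :
    |tent C ε d k - tent C ε d' k| ≤ |d - d'| := by
  refine (abs_max_sub_max_le_abs _ _ _).trans ?_
  rw [sub_sub_sub_cancel_right]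
  simpa using abs_min_sub_min_le_max C d C d'

lemma abs_tent_sub_tent_add_one_le (hε : 0 ≤ ε) (C d : ℝ) (k : ℤ) :
    |tent C ε d k - tent C ε d (k + 1)| ≤ ε := by
  refine (abs_max_sub_max_le_abs _ _ _).trans ?_
  rw [sub_sub_sub_cancel_left, ← mul_sub, abs_mul, abs_of_nonneg hε]
  refine mul_le_of_le_one_right hε ((abs_abs_sub_abs_le_abs_sub _ _).trans ?_)
  simp

end Tent

lemma valMinAbs_add_one_eq_or {n : ℕ} [NeZero n] (i : ZMod n) :
    (i + 1).valMinAbs = i.valMinAbs + 1 ∨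
      (n : ℤ) ≤ 2 * |i.valMinAbs| + 2 ∧ (n : ℤ) ≤ 2 * |(i + 1).valMinAbs| + 2 := by
  obtain ⟨hlo, hhi⟩ := i.valMinAbs_mem_Ioc
  by_cases hk : (i.valMinAbs + 1) * 2 ≤ n
  · left
    refine (ZMod.valMinAbs_spec _ _).2 ⟨by simp, ?_, hk⟩
    omega
  · right
    have wrap : (i + 1).valMinAbs = i.valMinAbs + 1 - n :=
      (ZMod.valMinAbs_spec _ _).2 ⟨by simp, by omega, by omega⟩
    have := le_abs_self i.valMinAbs
    have := neg_le_abs (i + 1).valMinAbs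
    omega

section RohlinEmbedding

variable {U : Type*} [PseudoMetricSpace U]

/-- The map recording, for `k` running over the residues mod `n` of least absolute value, the
damped distances from `h ^ (-k) u` to the points of `B`. It turns `h`, up to an error `ε`, into
the cyclic shift of `ZMod n`: the damping makes the values vanish where residues wrap around. -/
def rohlinEmbedding (h : U ≃ᵢ U) (B : Set U) (C ε : ℝ) (n : ℕ) (u : U) :
    Multiplicative (ZMod n) → B → ℝ :=
  fun i b => tent C ε (dist ((h ^ (-i.toAdd.valMinAbs)) u) b) i.toAdd.valMinAbs

variable {h : U ≃ᵢ U} {B : Set U} {C ε : ℝ} {n : ℕ} [NeZero n]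

lemma dist_rohlinEmbedding_add_one_le (hε : 0 ≤ ε) (hn : 2 * C ≤ ε * (n - 2)) (u : U)
    (i : ZMod n) (b : B) :
    dist (rohlinEmbedding h B C ε n u (.ofAdd i) b)
      (rohlinEmbedding h B C ε n (h u) (.ofAdd (i + 1)) b) ≤ ε := by
  obtain hstep | ⟨hi, hi'⟩ := valMinAbs_add_one_eq_or i
  · have same_dist : (h ^ (-(i + 1).valMinAbs)) (h u) = (h ^ (-i.valMinAbs)) u := by
      rw [hstep, ← IsometryEquiv.mul_apply, ← zpow_add_one, neg_add_rev, neg_add_cancel_comm]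
    simp only [rohlinEmbedding, toAdd_ofAdd]
    rw [same_dist, hstep]
    exact abs_tent_sub_tent_add_one_le hε _ _ _
  · have vanish : ∀ (k : ℤ) (d : ℝ), (n : ℤ) ≤ 2 * |k| + 2 → tent C ε d k = 0 := by
      intro k d hk
      have hk' : (n : ℝ) ≤ 2 * |(k : ℝ)| + 2 := mod_cast hk
      refine tent_eq_zero ?_ d
      nlinarith
    simpa [rohlinEmbedding, vanish _ _ hi, vanish _ _ hi'] using hε

variable [Fintype B]

lemma isometryOn_rohlinEmbedding (hB : ∀ x ∈ B, ∀ y ∈ B, dist x y ≤ C) :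
    IsometryOn (rohlinEmbedding h B C ε n) B := by
  intro x hx y hy
  refine le_antisymm ?_ ?_
  · refine (dist_pi_le_iff dist_nonneg).2 fun i => (dist_pi_le_iff dist_nonneg).2 fun b => ?_
    calc dist (rohlinEmbedding h B C ε n x i b) (rohlinEmbedding h B C ε n y i b)
        ≤ |dist ((h ^ (-i.toAdd.valMinAbs)) x) b - dist ((h ^ (-i.toAdd.valMinAbs)) y) b| :=
          abs_tent_sub_tent_le _ _ _ _ _
      _ ≤ dist ((h ^ (-i.toAdd.valMinAbs)) x) ((h ^ (-i.toAdd.valMinAbs)) y) :=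
          abs_dist_sub_le _ _ _
      _ = dist x y := (h ^ (-i.toAdd.valMinAbs)).dist_eq x y
  · have coord_one : ∀ u ∈ B, rohlinEmbedding h B C ε n u 1 ⟨y, hy⟩ = dist u y := fun u hu => by
      simpa [rohlinEmbedding] using tent_zero dist_nonneg (hB u hu y hy)
    calc dist x y
        = dist (rohlinEmbedding h B C ε n x 1 ⟨y, hy⟩) (rohlinEmbedding h B C ε n y 1 ⟨y, hy⟩) := by
          rw [coord_one x hx, coord_one y hy, dist_self, dist_zero_right,
            Real.norm_of_nonneg dist_nonneg]
      _ ≤ dist (rohlinEmbedding h B C ε n x 1) (rohlinEmbedding h B C ε n y 1) :=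
          dist_le_pi_dist _ _ _
      _ ≤ dist (rohlinEmbedding h B C ε n x) (rohlinEmbedding h B C ε n y) :=
          dist_le_pi_dist _ _ _

attribute [local instance] arrowAction in
lemma dist_smul_rohlinEmbedding_le (hε : 0 ≤ ε) (hn : 2 * C ≤ ε * (n - 2)) (u : U) :
    dist (Multiplicative.ofAdd (1 : ZMod n) • rohlinEmbedding h B C ε n u)
      (rohlinEmbedding h B C ε n (h u)) ≤ ε := by
  refine (dist_pi_le_iff hε).2 fun i => (dist_pi_le_iff hε).2 fun b => ?_
  simpa using! dist_rohlinEmbedding_add_one_le (h := h) hε hn u (-1 + i.toAdd) b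

end RohlinEmbedding

attribute [local instance] arrowAction in
lemma IsUrysohn.eventually_exists_pow_eq_one {U : Type*} [MetricSpace U] [CompleteSpace U]
    [TopologicalSpace.SeparableSpace U] (hU : IsUrysohn U) (h : U ≃ᵢ U) (A : Finset U) {ε : ℝ}
    (hε : 0 < ε) :
    ∀ᶠ n : ℕ in atTop, ∃ g : U ≃ᵢ U, g ^ n = 1 ∧ ∀ a ∈ A, dist (g a) (h a) ≤ ε := by
  let B : Set U := A ∪ h '' A
  have hB : B.Finite := A.finite_toSet.union (A.finite_toSet.image h)
  have := hB.fintype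
  obtain ⟨C, hC⟩ := Metric.isBounded_iff.1 hB.isBounded
  have n_large : ∀ᶠ n : ℕ in atTop, 2 * C / ε + 2 ≤ n :=
    tendsto_natCast_atTop_atTop.eventually_ge_atTop _
  filter_upwards [n_large, eventually_ne_atTop 0] with n hn hn0
  have : NeZero n := ⟨hn0⟩
  have hn' : 2 * C ≤ ε * (n - 2) := by
    rw [mul_comm ε, ← div_le_iff₀ hε]
    linarith
  have : IsIsometricSMul (Multiplicative (ZMod n)) (Multiplicative (ZMod n) → B → ℝ) :=
    isIsometricSMul_arrowAction
  obtain ⟨p, hp, hBp, hdist⟩ := hU.exists_partialIsometricAction (G := Multiplicative (ZMod n)) hB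
    (isometryOn_rohlinEmbedding (h := h) (ε := ε) (n := n) fun x hx y hy => hC hx hy)
  obtain ⟨ρ, hρ⟩ := hU.exists_monoidHom_eqOn p hp
  refine ⟨ρ (.ofAdd 1), ?_, fun a ha => ?_⟩
  · rw [← map_pow, ← ofAdd_nsmul, nsmul_one, ZMod.natCast_self, ofAdd_zero, map_one]
  · have haB : a ∈ B := .inl ha
    rw [hρ _ (hBp haB), hdist _ a haB (h a) (.inr (mem_image_of_mem h ha))]
    exact dist_smul_rohlinEmbedding_le hε.le hn' a

/-- Rohlin's Lemma for isometries of the Urysohn space `U`: for every infinite `S ⊆ ℕ` the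
set of isometries `g` of `U` with `g ^ n = 1` for some `n ∈ S` is dense in `Iso(U)` for the
topology of pointwise convergence, i.e., every basic neighbourhood
`{g : ∀ a ∈ A, dist (g a) (h a) < ε}` of an isometry `h` contains such a `g`. -/
theorem stmt18 {U : Type*} [MetricSpace U] [CompleteSpace U]
    [TopologicalSpace.SeparableSpace U] (hU : IsUrysohn U)
    (S : Set ℕ) (hS : S.Infinite) :
    ∀ (h : U ≃ᵢ U) (A : Finset U) (ε : ℝ), 0 < ε →
      ∃ g : U ≃ᵢ U, (∃ n ∈ S, g ^ n = 1) ∧ ∀ a ∈ A, dist (g a) (h a) < ε := by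
  intro h A ε hε
  obtain ⟨n, hnS, g, hgn, hgA⟩ := ((Nat.frequently_atTop_iff_infinite.2 hS).and_eventually
    (hU.eventually_exists_pow_eq_one h A (half_pos hε))).exists
  exact ⟨g, ⟨n, hnS, hgn⟩, fun a ha => (hgA a ha).trans_lt (half_lt_self hε)⟩
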